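/- Let q and m be positive integers and let k ∈ {4q-1, 4q, 4q+1, 4q+2}. Then every series-parallel graph G with girth at least k is (⌈(2 + 1/q)m⌉, m)-choosable: for every list assignment L with |L(v)| = ⌈(2 + 1/q)m⌉ for all vertices v, there exists an m-fold L-colouring of G. -/

import Mathlib

open SimpleGraph

/-- A two-terminal graph: a simple graph together with two terminal vertices. -/
structure TTGraph where
  V : Type
  G : SimpleGraph V
  x : V
  y : V

/-- Vertex type of the parallel composition. -/
def TTGraph.pV (A B : TTGraph) : Type := A.V ⊕ {v : B.V // v ≠ B.x ∧ v ≠ B.y}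

open Classical in
/-- The canonical map from the second graph into the parallel composition. -/
noncomputable def TTGraph.pmap (A B : TTGraph) (v : B.V) : A.pV B :=
  if h1 : v = B.x then Sum.inl A.x
  else if h2 : v = B.y then Sum.inl A.y
  else Sum.inr ⟨v, h1, h2⟩

/-- Parallel composition of two-terminal graphs: identify the two `x`'s and the two `y`'s. -/
noncomputable def TTGraph.parallel (A B : TTGraph) : TTGraph where
  V := A.pV B
  G := SimpleGraph.fromRel (fun u w =>
    (∃ a b, A.G.Adj a b ∧ u = Sum.inl a ∧ w = Sum.inl b) ∨
    (∃ a b, B.G.Adj a b ∧ u = A.pmap B a ∧ w = A.pmap B b))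
  x := Sum.inl A.x
  y := Sum.inl A.y

/-- Vertex type of the series composition. -/
def TTGraph.sV (A B : TTGraph) : Type := A.V ⊕ {v : B.V // v ≠ B.x}

open Classical in
/-- The canonical map from the second graph into the series composition. -/
noncomputable def TTGraph.smap (A B : TTGraph) (v : B.V) : A.sV B :=
  if h1 : v = B.x then Sum.inl A.y else Sum.inr ⟨v, h1⟩

/-- Series composition of two-terminal graphs: identify `y` of the first with `x` of the second. -/
noncomputable def TTGraph.series (A B : TTGraph) : TTGraph where
  V := A.sV B
  G := SimpleGraph.fromRel (fun u w =>
    (∃ a b, A.G.Adj a b ∧ u = Sum.inl a ∧ w = Sum.inl b) ∨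
    (∃ a b, B.G.Adj a b ∧ u = A.smap B a ∧ w = A.smap B b))
  x := Sum.inl A.x
  y := A.smap B B.y

/-- Isomorphism of two-terminal graphs (preserving terminals). -/
def TTGraph.Equiv (A B : TTGraph) : Prop :=
  ∃ e : A.G ≃g B.G, e A.x = B.x ∧ e A.y = B.y

/-- `K₂` with its two vertices as terminals. -/
def K2TT : TTGraph := ⟨Bool, ⊤, false, true⟩

/-- Two-terminal series-parallel graphs, built recursively from `K₂` by
series and parallel compositions (up to terminal-preserving isomorphism). -/
inductive IsSP : TTGraph → Prop
  | k2 (A : TTGraph) : A.Equiv K2TT → IsSP A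
  | parallel (A B C : TTGraph) : IsSP A → IsSP B → C.Equiv (A.parallel B) → IsSP C
  | series (A B C : TTGraph) : IsSP A → IsSP B → C.Equiv (A.series B) → IsSP C

/-- A graph is series-parallel if it is a two-terminal series-parallel graph
for some choice of terminals. -/
def SeriesParallel {V : Type} (G : SimpleGraph V) : Prop :=
  ∃ x y : V, IsSP ⟨V, G, x, y⟩

/-- `G` is `(a, m)`-choosable: every list assignment with lists of size `a`
admits an `m`-fold colouring from the lists with adjacent vertices getting
disjoint colour sets. -/
def Choosable {V : Type} (G : SimpleGraph V) (a m : ℕ) : Prop :=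
  ∀ L : V → Finset ℕ, (∀ v, (L v).card = a) →
    ∃ φ : V → Finset ℕ, (∀ v, φ v ⊆ L v) ∧ (∀ v, (φ v).card = m) ∧
      ∀ u w, G.Adj u w → Disjoint (φ u) (φ w)

/-- `G` is a path graph: it has a Hamiltonian path using all of its edges. -/
def IsPathGraph {V : Type} (G : SimpleGraph V) : Prop :=
  ∃ (u w : V) (p : G.Walk u w), p.IsPath ∧ (∀ v, v ∈ p.support) ∧
    ∀ e ∈ G.edgeSet, e ∈ p.edges

/-- `G` is a cycle graph: it has a Hamiltonian cycle using all of its edges. -/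
def IsCycleGraph {V : Type} (G : SimpleGraph V) : Prop :=
  ∃ (u : V) (p : G.Walk u u), p.IsCycle ∧ (∀ v, v ∈ p.support) ∧
    ∀ e ∈ G.edgeSet, e ∈ p.edges

/-!
Every two-terminal series-parallel graph of girth at least `4q - 1` contains a path between its
terminals all of whose `m`-fold colourings extend to the whole graph. In a parallel composition, two
distinct terminal paths have total length at least `4q - 1`, so one of them has length at least
`2q`. Such a path can be coloured with arbitrary sets prescribed at its two ends, because the
possible conflict at one end shrinks by `⌈m / q⌉` colours every two steps. Hence it can follow any
colouring of the other path. In a series composition, the two paths are concatenated.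
-/

open Finset Function

lemma exists_subset_card_eq_inter_card_le {α : Type*} [DecidableEq α] {X T : Finset α} {m c : ℕ}
    (hX : m ≤ #X) (hXT : m ≤ #(X \ T) + c) : ∃ F ⊆ X, #F = m ∧ #(F ∩ T) ≤ c := by
  rcases le_total m #(X \ T) with h | h
  · obtain ⟨F, hFX, hF⟩ := exists_subset_card_eq h
    have hFT : F ∩ T = ∅ := disjoint_iff_inter_eq_empty.1 (disjoint_sdiff_self_left.mono_left hFX)
    exact ⟨F, hFX.trans sdiff_subset, hF, by simp [hFT]⟩
  · obtain ⟨F, hXF, hFX, hF⟩ := exists_subsuperset_card_eq (sdiff_subset (s := X) (t := T)) h hX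
    have hXF' : #(X \ T) ≤ #(F \ T) :=
      card_le_card fun z hz ↦ mem_sdiff.2 ⟨hXF hz, (mem_sdiff.1 hz).2⟩
    have := card_sdiff_add_card_inter F T
    exact ⟨F, hFX, hF, by lia⟩

section Coloring

variable {V α : Type*} {G : SimpleGraph V} {L : V → Finset α} {m : ℕ}

/-- `φ` is an `m`-fold `L`-colouring of the subgraph `H`; its values off `H` are arbitrary. -/
structure IsMultiColoring (L : V → Finset α) (m : ℕ) (H : G.Subgraph) (φ : V → Finset α) :
    Prop where
  subset : ∀ v ∈ H.verts, φ v ⊆ L v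
  card_eq : ∀ v ∈ H.verts, #(φ v) = m
  disjoint : ∀ ⦃u v⦄, H.Adj u v → Disjoint (φ u) (φ v)

namespace IsMultiColoring

variable {H K : G.Subgraph} {φ ψ : V → Finset α}

lemma mono (hφ : IsMultiColoring L m K φ) (hHK : H ≤ K) : IsMultiColoring L m H φ where
  subset v hv := hφ.subset v (hHK.1 hv)
  card_eq v hv := hφ.card_eq v (hHK.1 hv)
  disjoint _ _ h := hφ.disjoint (hHK.2 h)

lemma congr (hφ : IsMultiColoring L m H φ) (h : Set.EqOn ψ φ H.verts) :
    IsMultiColoring L m H ψ where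
  subset v hv := h hv ▸ hφ.subset v hv
  card_eq v hv := h hv ▸ hφ.card_eq v hv
  disjoint u v huv := by
    rw [h (H.edge_vert huv), h (H.edge_vert huv.symm)]
    exact hφ.disjoint huv

lemma sup (hH : IsMultiColoring L m H φ) (hK : IsMultiColoring L m K φ) :
    IsMultiColoring L m (H ⊔ K) φ where
  subset v hv := hv.elim (hH.subset v) (hK.subset v)
  card_eq v hv := hv.elim (hH.card_eq v) (hK.card_eq v)
  disjoint _ _ h := h.elim (hH.disjoint ·) (hK.disjoint ·)

lemma exists_sup_of_eqOn (hφ : IsMultiColoring L m H φ) (hψ : IsMultiColoring L m K ψ)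
    (h : Set.EqOn φ ψ (H.verts ∩ K.verts)) :
    ∃ χ, IsMultiColoring L m (H ⊔ K) χ ∧ Set.EqOn χ φ H.verts ∧ Set.EqOn χ ψ K.verts := by
  classical
  have hχφ : Set.EqOn (H.verts.piecewise φ ψ) φ H.verts := Set.piecewise_eqOn ..
  have hχψ : Set.EqOn (H.verts.piecewise φ ψ) ψ K.verts := fun v hv ↦ by
    by_cases hvH : v ∈ H.verts
    · rw [hχφ hvH, h ⟨hvH, hv⟩]
    · exact Set.piecewise_eq_of_notMem _ _ _ hvH
  exact ⟨_, (hφ.congr hχφ).sup (hψ.congr hχψ), hχφ, hχψ⟩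

lemma update_cons [DecidableEq V] {u v w : V} {p : G.Walk v w} {F : Finset α}
    (hφ : IsMultiColoring L m p.toSubgraph φ) (h : G.Adj u v) (hu : u ∉ p.support)
    (hFL : F ⊆ L u) (hF : #F = m) (hFφ : Disjoint F (φ v)) :
    IsMultiColoring L m (Walk.cons h p).toSubgraph (update φ u F) := by
  have hvp := p.start_mem_verts_toSubgraph
  have hp : Set.EqOn (update φ u F) φ p.toSubgraph.verts := fun z hz ↦
    update_of_ne (by rintro rfl; exact hu (p.mem_verts_toSubgraph.1 hz)) ..
  have hedge : IsMultiColoring L m (G.subgraphOfAdj h) (update φ u F) := by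
    constructor
    · rintro z (rfl | rfl)
      · simpa using hFL
      · exact hp hvp ▸ hφ.subset z hvp
    · rintro z (rfl | rfl)
      · simpa using hF
      · exact hp hvp ▸ hφ.card_eq z hvp
    · intro a b hab
      rcases Sym2.eq_iff.1 hab with ⟨rfl, rfl⟩ | ⟨rfl, rfl⟩
      · simpa [hp hvp] using hFφ
      · simpa [hp hvp] using hFφ.symm
  exact hedge.sup (hφ.congr hp)

end IsMultiColoring

end Coloring

section Path

variable {V α : Type*} {G : SimpleGraph V} {L : V → Finset α} {m e q : ℕ}
  {S T : Finset α} {u v w : V} {p : G.Walk v w}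

/-- Any `b` colours can be avoided at the start of the walk `p`, up to `c` of them, by an `m`-fold
`L`-colouring of `p` that uses the prescribed set `S` at the end of `p`. -/
def CanAvoid [DecidableEq α] (L : V → Finset α) (m : ℕ) (S : Finset α) (p : G.Walk v w)
    (b c : ℕ) : Prop :=
  ∀ B : Finset α, #B ≤ b →
    ∃ φ, IsMultiColoring L m p.toSubgraph φ ∧ φ w = S ∧ #(φ v ∩ B) ≤ c

lemma canAvoid_nil [DecidableEq α] (hSL : S ⊆ L w) (hS : #S = m) (b : ℕ) :
    CanAvoid L m S (Walk.nil : G.Walk w w) b m := by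
  intro B _
  refine ⟨fun _ ↦ S, ⟨?_, ?_, ?_⟩, rfl, (card_le_card inter_subset_left).trans_eq hS⟩
  · rintro v rfl
    exact hSL
  · exact fun _ _ ↦ hS
  · rintro _ _ ⟨⟩

-- To avoid `T` at `u`, make the colouring of `p` use few colours at `v` from a set `B ⊆ L u \ T` of
-- size `b'`: the rest of `B` is then available at `u`.
lemma CanAvoid.cons [DecidableEq α] {b b' c c' : ℕ} (hp : CanAvoid L m S p b' c)
    (h : G.Adj u v) (hu : u ∉ p.support) (hL : 2 * m ≤ #(L u)) (hb : b + b' ≤ #(L u))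
    (hc : m + c ≤ b' + c') :
    CanAvoid L m S (Walk.cons h p) b c' := by
  classical
  intro T hT
  obtain ⟨B, hBT, hB⟩ : ∃ B ⊆ L u \ T, #B = b' :=
    exists_subset_card_eq (by have := le_card_sdiff T (L u); lia)
  obtain ⟨φ, hφ, hφw, hφB⟩ := hp B hB.le
  have hX : m ≤ #(L u \ φ v) := by
    have := hφ.card_eq v p.start_mem_verts_toSubgraph
    have := le_card_sdiff (φ v) (L u)
    lia
  have hXT : m ≤ #((L u \ φ v) \ T) + c' := by
    have hBX : #(B \ φ v) ≤ #((L u \ φ v) \ T) := by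
      rw [sdiff_right_comm]
      exact card_le_card (sdiff_subset_sdiff hBT le_rfl)
    have := card_sdiff_add_card_inter B (φ v)
    rw [inter_comm] at this
    lia
  obtain ⟨F, hFX, hF, hFT⟩ := exists_subset_card_eq_inter_card_le hX hXT
  have hwu : w ≠ u := by
    rintro rfl
    exact hu p.end_mem_support
  refine ⟨update φ u F, hφ.update_cons h hu (hFX.trans sdiff_subset) hF ?_, ?_, ?_⟩
  · exact disjoint_sdiff_self_left.mono_left hFX
  · rwa [update_of_ne hwu]
  · rwa [update_self]

-- Two steps along the path reduce the overlap by `e`: the sizes of the sets to be avoided alternate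
-- between `m` and `m + e`, which add up to the size of a list.
lemma canAvoid_of_isPath [DecidableEq α] (hp : p.IsPath) (hL : ∀ v, 2 * m + e ≤ #(L v))
    (hSL : S ⊆ L w) (hS : #S = m) :
    CanAvoid L m S p m (m - (p.length + 1) / 2 * e) ∧
      CanAvoid L m S p (m + e) (m - p.length / 2 * e) := by
  induction p with
  | nil => simpa using ⟨canAvoid_nil hSL hS m, canAvoid_nil hSL hS (m + e)⟩
  | @cons u v w h p ih =>
    rw [Walk.cons_isPath_iff] at hp
    obtain ⟨hshort, hlong⟩ := ih hp.1 hSL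
    have hu := hL u
    have hlen : (p.length + 1 + 1) / 2 * e = p.length / 2 * e + e := by
      rw [show (p.length + 1 + 1) / 2 = p.length / 2 + 1 by lia, Nat.succ_mul]
    rw [Walk.length_cons, hlen]
    exact ⟨hlong.cons h hp.2 (by lia) (by lia) (by lia),
      hshort.cons h hp.2 (by lia) (by lia) (by lia)⟩

lemma exists_isMultiColoring_of_ends (hp : p.IsPath)
    (hL : ∀ v, 2 * m + e ≤ #(L v)) (hq : 0 < q) (he : m ≤ q * e) (hpq : 2 * q ≤ p.length)
    (hTL : T ⊆ L v) (hT : #T = m) (hSL : S ⊆ L w) (hS : #S = m) :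
    ∃ φ, IsMultiColoring L m p.toSubgraph φ ∧ φ v = T ∧ φ w = S := by
  classical
  cases p with
  | nil =>
    rw [Walk.length_nil] at hpq
    lia
  | @cons _ v _ h p =>
    rw [Walk.cons_isPath_iff] at hp
    have hqp : q ≤ (p.length + 1) / 2 := by
      rw [Walk.length_cons] at hpq
      lia
    obtain ⟨φ, hφ, hφw, hφT⟩ := (canAvoid_of_isPath hp.1 hL hSL hS).1 T hT.le
    have hzero : m - (p.length + 1) / 2 * e = 0 :=
      Nat.sub_eq_zero_of_le (he.trans (Nat.mul_le_mul_right e hqp))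
    rw [hzero, Nat.le_zero, card_eq_zero, inter_comm, ← disjoint_iff_inter_eq_empty] at hφT
    refine ⟨update φ _ T, hφ.update_cons h hp.2 hTL hT hφT, update_self .., ?_⟩
    rw [update_of_ne (by rintro rfl; exact hp.2 p.end_mem_support), hφw]

end Path

/-- Two-terminal series-parallel subgraphs of a fixed graph `G`: here the compositions are unions of
subgraphs that meet in the identified terminals only. -/
inductive IsSPSubgraph {V : Type*} {G : SimpleGraph V} : V → V → G.Subgraph → Prop
  | edge {x y : V} (h : G.Adj x y) : IsSPSubgraph x y (G.subgraphOfAdj h)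
  | parallel {x y : V} {H K : G.Subgraph} (hH : IsSPSubgraph x y H) (hK : IsSPSubgraph x y K)
      (hHK : H.verts ∩ K.verts ⊆ {x, y}) : IsSPSubgraph x y (H ⊔ K)
  | series {x y z : V} {H K : G.Subgraph} (hH : IsSPSubgraph x y H) (hK : IsSPSubgraph y z K)
      (hHK : H.verts ∩ K.verts ⊆ {y}) : IsSPSubgraph x z (H ⊔ K)

section SubgraphDecomposition

variable {V W : Type*} {G : SimpleGraph V} {G' : SimpleGraph W} {H : G.Subgraph} {x y : V}

namespace IsSPSubgraph

lemma left_mem (h : IsSPSubgraph x y H) : x ∈ H.verts := by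
  induction h with
  | edge _ => exact Or.inl rfl
  | parallel _ _ _ ihH _ => exact Or.inl ihH
  | series _ _ _ ihH _ => exact Or.inl ihH

lemma right_mem (h : IsSPSubgraph x y H) : y ∈ H.verts := by
  induction h with
  | edge _ => exact Or.inr rfl
  | parallel _ _ _ ihH _ => exact Or.inl ihH
  | series _ _ _ _ ihK => exact Or.inr ihK

lemma ne (h : IsSPSubgraph x y H) : x ≠ y := by
  induction h with
  | edge h => exact h.ne
  | parallel _ _ _ ihH _ => exact ihH
  | series hH hK hHK ihH _ =>
    rintro rfl
    exact ihH (hHK ⟨hH.left_mem, hK.right_mem⟩)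

lemma map {f : G →g G'} (hf : Injective f) (h : IsSPSubgraph x y H) :
    IsSPSubgraph (f x) (f y) (H.map f) := by
  induction h with
  | edge h => exact map_subgraphOfAdj f h ▸ .edge (f.map_adj h)
  | @parallel x y _ _ _ _ hHK ihH ihK =>
    rw [Subgraph.map_sup]
    refine ihH.parallel ihK ?_
    rw [Subgraph.map_verts, Subgraph.map_verts, ← Set.image_inter hf, ← Set.image_pair]
    exact Set.image_mono hHK
  | @series _ y _ _ _ _ _ hHK ihH ihK =>
    rw [Subgraph.map_sup]
    refine ihH.series ihK ?_
    rw [Subgraph.map_verts, Subgraph.map_verts, ← Set.image_inter hf, ← Set.image_singleton]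
    exact Set.image_mono hHK

end IsSPSubgraph

end SubgraphDecomposition

section Gluing

variable {U V W : Type*} {G : SimpleGraph U} {G' : SimpleGraph V} {G'' : SimpleGraph W}
  {f : U → W} {g : V → W} {x y : U} {x' y' : V}

lemma fromRel_eq_map_sup_map :
    SimpleGraph.fromRel (fun u w ↦ (∃ a b, G.Adj a b ∧ u = f a ∧ w = f b) ∨
      ∃ a b, G'.Adj a b ∧ u = g a ∧ w = g b) = G.map f ⊔ G'.map g := by
  ext u w
  simp only [fromRel_adj, sup_adj, SimpleGraph.map_adj']
  grind [SimpleGraph.Adj.symm]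

lemma exists_hom_coe_eq (hf : Injective f) (h : G.map f ≤ G'') : ∃ F : G →g G'', ⇑F = f :=
  ⟨(Hom.ofLE h).comp (.map f G fun huv ↦ hf.ne huv.ne), rfl⟩

lemma map_top_sup_map_top {f : G →g G''} {g : G' →g G''} (hV : Set.range f ∪ Set.range g = .univ)
    (hE : G'' ≤ G.map f ⊔ G'.map g) :
    (⊤ : G.Subgraph).map f ⊔ (⊤ : G'.Subgraph).map g = ⊤ := by
  refine top_unique ⟨?_, fun u v huv ↦ ?_⟩
  · simpa [Subgraph.map_verts] using hV.ge
  · exact (hE huv).imp And.right And.right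

namespace IsSPSubgraph

lemma parallel_top (hG : IsSPSubgraph x y (⊤ : G.Subgraph))
    (hG' : IsSPSubgraph x' y' (⊤ : G'.Subgraph)) (hf : Injective f) (hg : Injective g)
    (hV : Set.range f ∪ Set.range g = .univ) (hE : G'' = G.map f ⊔ G'.map g)
    (hx : g x' = f x) (hy : g y' = f y) (hfg : Set.range f ∩ Set.range g ⊆ {f x, f y}) :
    IsSPSubgraph (f x) (f y) (⊤ : G''.Subgraph) := by
  obtain ⟨f, rfl⟩ := exists_hom_coe_eq hf (le_sup_left.trans_eq hE.symm)
  obtain ⟨g, rfl⟩ := exists_hom_coe_eq hg (le_sup_right.trans_eq hE.symm)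
  rw [← map_top_sup_map_top hV hE.le]
  refine (hG.map hf).parallel (hx ▸ hy ▸ hG'.map hg) ?_
  simpa only [Subgraph.map_verts, Subgraph.verts_top, Set.image_univ] using hfg

lemma series_top (hG : IsSPSubgraph x y (⊤ : G.Subgraph))
    (hG' : IsSPSubgraph x' y' (⊤ : G'.Subgraph)) (hf : Injective f) (hg : Injective g)
    (hV : Set.range f ∪ Set.range g = .univ) (hE : G'' = G.map f ⊔ G'.map g)
    (hx : g x' = f y) (hfg : Set.range f ∩ Set.range g ⊆ {f y}) :
    IsSPSubgraph (f x) (g y') (⊤ : G''.Subgraph) := by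
  obtain ⟨f, rfl⟩ := exists_hom_coe_eq hf (le_sup_left.trans_eq hE.symm)
  obtain ⟨g, rfl⟩ := exists_hom_coe_eq hg (le_sup_right.trans_eq hE.symm)
  rw [← map_top_sup_map_top hV hE.le]
  refine (hG.map hf).series (hx ▸ hG'.map hg) ?_
  simpa only [Subgraph.map_verts, Subgraph.verts_top, Set.image_univ] using hfg

end IsSPSubgraph

end Gluing

namespace TTGraph

variable {A B C D : TTGraph}

lemma pmap_injective (hA : A.x ≠ A.y) : Injective (A.pmap B) := by
  intro u v h
  unfold pmap at h
  grind

lemma smap_injective : Injective (A.smap B) := by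
  intro u v h
  unfold smap at h
  grind

lemma range_inl_union_range_pmap : Set.range Sum.inl ∪ Set.range (A.pmap B) = .univ := by
  refine Set.eq_univ_of_forall ?_
  rintro (v | ⟨v, hx, hy⟩)
  · exact Or.inl ⟨v, rfl⟩
  · exact Or.inr ⟨v, (dif_neg hx).trans (dif_neg hy)⟩

lemma range_inl_inter_range_pmap_subset :
    Set.range Sum.inl ∩ Set.range (A.pmap B) ⊆ {Sum.inl A.x, Sum.inl A.y} := by
  rintro _ ⟨⟨u, rfl⟩, v, h⟩
  unfold pmap at h
  grind

lemma range_inl_union_range_smap : Set.range Sum.inl ∪ Set.range (A.smap B) = .univ := by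
  refine Set.eq_univ_of_forall ?_
  rintro (v | ⟨v, hx⟩)
  · exact Or.inl ⟨v, rfl⟩
  · exact Or.inr ⟨v, dif_neg hx⟩

lemma range_inl_inter_range_smap_subset :
    Set.range Sum.inl ∩ Set.range (A.smap B) ⊆ {Sum.inl A.y} := by
  rintro _ ⟨⟨u, rfl⟩, v, h⟩
  unfold smap at h
  grind

lemma isSPSubgraph_parallel_top (hA : IsSPSubgraph A.x A.y (⊤ : A.G.Subgraph))
    (hB : IsSPSubgraph B.x B.y (⊤ : B.G.Subgraph)) :
    IsSPSubgraph (A.parallel B).x (A.parallel B).y (⊤ : (A.parallel B).G.Subgraph) :=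
  hA.parallel_top hB Sum.inl_injective (pmap_injective hA.ne) range_inl_union_range_pmap
    fromRel_eq_map_sup_map (dif_pos rfl) ((dif_neg hB.ne.symm).trans (dif_pos rfl))
    range_inl_inter_range_pmap_subset

lemma isSPSubgraph_series_top (hA : IsSPSubgraph A.x A.y (⊤ : A.G.Subgraph))
    (hB : IsSPSubgraph B.x B.y (⊤ : B.G.Subgraph)) :
    IsSPSubgraph (A.series B).x (A.series B).y (⊤ : (A.series B).G.Subgraph) :=
  hA.series_top (g := A.smap B) hB Sum.inl_injective smap_injective range_inl_union_range_smap
    fromRel_eq_map_sup_map (dif_pos rfl) range_inl_inter_range_smap_subset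

lemma Equiv.isSPSubgraph_top (h : C.Equiv D) (hD : IsSPSubgraph D.x D.y (⊤ : D.G.Subgraph)) :
    IsSPSubgraph C.x C.y (⊤ : C.G.Subgraph) := by
  obtain ⟨e, hx, hy⟩ := h
  have hC := hD.map (f := e.symm.toHom) e.symm.injective
  rw [Subgraph.map_iso_top, ← hx, ← hy] at hC
  simpa using hC

end TTGraph

lemma isSPSubgraph_K2TT_top : IsSPSubgraph K2TT.x K2TT.y (⊤ : K2TT.G.Subgraph) := by
  have h : K2TT.G.Adj K2TT.x K2TT.y := Bool.false_ne_true
  have htop : K2TT.G.subgraphOfAdj h = ⊤ := by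
    refine top_unique ⟨?_, ?_⟩
    · rintro (_ | _) _
      · exact Or.inl rfl
      · exact Or.inr rfl
    · rintro (_ | _) (_ | _) huv
      · exact (huv rfl).elim
      · exact rfl
      · exact Sym2.eq_swap
      · exact (huv rfl).elim
  exact htop ▸ .edge h

lemma IsSP.isSPSubgraph_top {A : TTGraph} (hA : IsSP A) :
    IsSPSubgraph A.x A.y (⊤ : A.G.Subgraph) := by
  induction hA with
  | k2 A h => exact h.isSPSubgraph_top isSPSubgraph_K2TT_top
  | parallel A B C _ _ h ihA ihB =>
    exact h.isSPSubgraph_top (TTGraph.isSPSubgraph_parallel_top ihA ihB)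
  | series A B C _ _ h ihA ihB =>
    exact h.isSPSubgraph_top (TTGraph.isSPSubgraph_series_top ihA ihB)

section Extension

variable {V α : Type*} {G : SimpleGraph V} {L : V → Finset α} {m e q : ℕ} {x y z : V}

lemma isPath_append {p : G.Walk x y} {p' : G.Walk y z} (hp : p.IsPath) (hp' : p'.IsPath)
    (h : ∀ v ∈ p.support, v ∈ p'.support → v = y) : (p.append p').IsPath := by
  have hy : y ∉ p'.support.tail := by
    have := hp'.support_nodup
    rw [← p'.cons_tail_support, List.nodup_cons] at this
    exact this.1
  rw [Walk.isPath_def, Walk.support_append, List.nodup_append']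
  refine ⟨hp.support_nodup, hp'.support_nodup.tail, fun v hv hv' ↦ hy ?_⟩
  exact h v hv (List.mem_of_mem_tail hv') ▸ hv'

lemma egirth_le_length_add_length {p p' : G.Walk x y} (hp : p.IsPath) (hp' : p'.IsPath)
    (hne : p ≠ p') : G.egirth ≤ (p.length + p'.length : ℕ) := by
  obtain ⟨_, -, -, c, hc, hlen⟩ := hp.exists_isCycle_length_le_add_of_ne hp' hne
  exact (egirth_le_length hc).trans (Nat.cast_le.2 hlen)

/-- `K` is a subgraph of `H` each of whose `m`-fold `L`-colourings extends to `H`. -/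
structure ColoringsExtend (L : V → Finset α) (m : ℕ) (K H : G.Subgraph) : Prop where
  le : K ≤ H
  exists_eqOn : ∀ φ, IsMultiColoring L m K φ →
    ∃ ψ, IsMultiColoring L m H ψ ∧ Set.EqOn ψ φ K.verts

namespace ColoringsExtend

variable {H H' K K' : G.Subgraph}

lemma refl (L : V → Finset α) (m : ℕ) (H : G.Subgraph) : ColoringsExtend L m H H :=
  ⟨le_rfl, fun φ hφ ↦ ⟨φ, hφ, Set.eqOn_refl ..⟩⟩

lemma sup_sup (h : ColoringsExtend L m K H) (h' : ColoringsExtend L m K' H')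
    (hHH' : H.verts ∩ H'.verts ⊆ K.verts ∩ K'.verts) :
    ColoringsExtend L m (K ⊔ K') (H ⊔ H') := by
  refine ⟨sup_le_sup h.le h'.le, fun φ hφ ↦ ?_⟩
  obtain ⟨ψ, hψ, hψφ⟩ := h.exists_eqOn φ (hφ.mono le_sup_left)
  obtain ⟨ψ', hψ', hψφ'⟩ := h'.exists_eqOn φ (hφ.mono le_sup_right)
  obtain ⟨χ, hχ, hχψ, hχψ'⟩ := hψ.exists_sup_of_eqOn hψ' fun v hv ↦
    (hψφ (hHH' hv).1).trans (hψφ' (hHH' hv).2).symm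
  refine ⟨χ, hχ, ?_⟩
  rintro v (hv | hv)
  · exact (hχψ (h.le.1 hv)).trans (hψφ hv)
  · exact (hχψ' (h'.le.1 hv)).trans (hψφ' hv)

lemma sup_right (h : ColoringsExtend L m K H) (h' : ColoringsExtend L m K' H')
    (hHH' : H.verts ∩ H'.verts ⊆ K.verts ∩ K'.verts)
    (hKK' : ∀ φ, IsMultiColoring L m K φ →
      ∃ φ', IsMultiColoring L m K' φ' ∧ Set.EqOn φ' φ (H.verts ∩ H'.verts)) :
    ColoringsExtend L m K (H ⊔ H') := by
  refine ⟨h.le.trans le_sup_left, fun φ hφ ↦ ?_⟩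
  obtain ⟨φ', hφ', hφφ'⟩ := hKK' φ hφ
  obtain ⟨ψ, hψ, hψφ⟩ := h.exists_eqOn φ hφ
  obtain ⟨ψ', hψ', hψφ'⟩ := h'.exists_eqOn φ' hφ'
  obtain ⟨χ, hχ, hχψ, -⟩ := hψ.exists_sup_of_eqOn hψ' fun v hv ↦
    (hψφ (hHH' hv).1).trans ((hψφ' (hHH' hv).2).trans (hφφ' hv)).symm
  exact ⟨χ, hχ, fun v hv ↦ (hχψ (h.le.1 hv)).trans (hψφ hv)⟩

lemma sup_right_of_le_length {p p' : G.Walk x y} (h : ColoringsExtend L m p.toSubgraph H)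
    (h' : ColoringsExtend L m p'.toSubgraph H') (hHH' : H.verts ∩ H'.verts ⊆ {x, y})
    (hp' : p'.IsPath) (hL : ∀ v, 2 * m + e ≤ #(L v)) (hq : 0 < q) (he : m ≤ q * e)
    (hpq : 2 * q ≤ p'.length) :
    ColoringsExtend L m p.toSubgraph (H ⊔ H') := by
  classical
  refine h.sup_right h' (hHH'.trans (by simp [Set.pair_subset_iff])) fun φ hφ ↦ ?_
  have hx := p.start_mem_verts_toSubgraph
  have hy := p.end_mem_verts_toSubgraph
  obtain ⟨φ', hφ', hφx, hφy⟩ := exists_isMultiColoring_of_ends hp' hL hq he hpq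
    (hφ.subset x hx) (hφ.card_eq x hx) (hφ.subset y hy) (hφ.card_eq y hy)
  refine ⟨φ', hφ', Set.EqOn.mono hHH' ?_⟩
  rintro v (rfl | rfl)
  · exact hφx
  · exact hφy

end ColoringsExtend

lemma IsSPSubgraph.exists_isPath_coloringsExtend {H : G.Subgraph} (hH : IsSPSubgraph x y H)
    (hG : ((4 * q - 1 : ℕ) : ℕ∞) ≤ G.egirth) (hL : ∀ v, 2 * m + e ≤ #(L v)) (hq : 0 < q)
    (he : m ≤ q * e) :
    ∃ p : G.Walk x y, p.IsPath ∧ ColoringsExtend L m p.toSubgraph H := by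
  induction hH with
  | edge h => exact ⟨h.toWalk, h.isPath_toWalk, h.toSubgraph_toWalk ▸ .refl ..⟩
  | @parallel x y H K _ _ hHK ihH ihK =>
    obtain ⟨p, hp, hpH⟩ := ihH
    obtain ⟨p', hp', hpK⟩ := ihK
    obtain rfl | hne := eq_or_ne p p'
    · refine ⟨p, hp, hpH.sup_right hpK (hHK.trans ?_) fun φ hφ ↦ ⟨φ, hφ, Set.eqOn_refl ..⟩⟩
      simp [Set.pair_subset_iff]
    have hlen : 4 * q - 1 ≤ p.length + p'.length :=
      Nat.cast_le.1 (hG.trans (egirth_le_length_add_length hp hp' hne))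
    obtain hpq | hpq : 2 * q ≤ p'.length ∨ 2 * q ≤ p.length := by lia
    · exact ⟨p, hp, hpH.sup_right_of_le_length hpK hHK hp' hL hq he hpq⟩
    · rw [sup_comm]
      rw [Set.inter_comm] at hHK
      exact ⟨p', hp', hpK.sup_right_of_le_length hpH hHK hp hL hq he hpq⟩
  | @series x y z H K _ _ hHK ihH ihK =>
    obtain ⟨p, hp, hpH⟩ := ihH
    obtain ⟨p', hp', hpK⟩ := ihK
    refine ⟨p.append p', isPath_append hp hp' fun v hv hv' ↦ hHK ⟨?_, ?_⟩, ?_⟩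
    · exact hpH.le.1 (p.mem_verts_toSubgraph.2 hv)
    · exact hpK.le.1 (p'.mem_verts_toSubgraph.2 hv')
    · rw [Walk.toSubgraph_append]
      exact hpH.sup_sup hpK (hHK.trans (by simp))

end Extension

lemma two_mul_add_ceilDiv_le {q m n : ℕ} (hq : 0 < q) (h : ((2 : ℝ) + 1 / q) * m ≤ n) :
    2 * m + m ⌈/⌉ q ≤ n := by
  have hqR : (0 : ℝ) < q := Nat.cast_pos.2 hq
  have hqn : q * (2 * m) + m ≤ q * n := by
    field_simp at h
    rify
    linarith
  obtain ⟨c, rfl⟩ : ∃ c, n = 2 * m + c :=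
    Nat.exists_eq_add_of_le (le_of_mul_le_mul_left ((Nat.le_add_right ..).trans hqn) hq)
  rw [Nat.mul_add] at hqn
  exact Nat.add_le_add_left ((ceilDiv_le_iff_le_mul hq).2 (Nat.le_of_add_le_add_left hqn)) _

theorem stmt_4_general {q m : ℕ} (hq : 0 < q) {V : Type} {α : Type*} {G : SimpleGraph V}
    (hSP : SeriesParallel G) (hgirth : ((4 * q - 1 : ℕ) : ℕ∞) ≤ G.egirth) (L : V → Finset α)
    (hL : ∀ v, ((2 : ℝ) + 1 / q) * m ≤ #(L v)) :
    ∃ φ : V → Finset α, (∀ v, φ v ⊆ L v) ∧ (∀ v, #(φ v) = m) ∧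
      ∀ u w, G.Adj u w → Disjoint (φ u) (φ w) := by
  classical
  obtain ⟨x, y, hG⟩ := hSP
  have hL' (v : V) : 2 * m + m ⌈/⌉ q ≤ #(L v) := two_mul_add_ceilDiv_le hq (hL v)
  have he : m ≤ q * (m ⌈/⌉ q) := le_smul_ceilDiv hq
  obtain ⟨p, hp, hpG⟩ := hG.isSPSubgraph_top.exists_isPath_coloringsExtend hgirth hL' hq he
  obtain ⟨S, hSL, hS⟩ : ∃ S ⊆ L y, #S = m := exists_subset_card_eq (by have := hL' y; lia)
  obtain ⟨φ, hφ, -, -⟩ := (canAvoid_of_isPath hp hL' hSL hS).1 ∅ (Nat.zero_le m)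
  obtain ⟨ψ, hψ, -⟩ := hpG.exists_eqOn φ hφ
  exact ⟨ψ, fun v ↦ hψ.subset v trivial, fun v ↦ hψ.card_eq v trivial, fun _ _ h ↦ hψ.disjoint h⟩

/-- Theorem 2: for `k ∈ {4q-1, 4q, 4q+1, 4q+2}`, every series-parallel graph of
girth at least `k` is `(⌈(2 + 1/q)m⌉, m)`-choosable. -/
theorem stmt_4 (q m k : ℕ) (hq : 0 < q) (hm : 0 < m)
    (hk : k ∈ ({4 * q - 1, 4 * q, 4 * q + 1, 4 * q + 2} : Set ℕ))
    (V : Type) (G : SimpleGraph V) (hSP : SeriesParallel G)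
    (hgirth : (k : ℕ∞) ≤ G.egirth) :
    Choosable G ⌈((2 : ℝ) + 1 / q) * m⌉₊ m := by
  have hqk : 4 * q - 1 ≤ k := by rcases hk with rfl | rfl | rfl | rfl <;> lia
  exact fun L hL ↦ stmt_4_general hq hSP ((Nat.cast_le.2 hqk).trans hgirth) L
    fun v ↦ hL v ▸ Nat.le_ceil _
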